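/- (Lemma 2) Let $A$ be an $n\times n$ real matrix and let $\pi \in \mathbb{R}^n$ be a row vector with $\pi A = \pi$ and $\sum_{i=1}^n \pi_i = 1$. Let $\gamma_1,\dots,\gamma_p$ be reals with $\sum_{l=1}^p \gamma_l = 1$. Define the $np$-dimensional row vector $\tilde{\pi}$ by $\tilde{\pi}_{(l,i)} = \gamma_l \pi_i$. Then $\tilde{\pi}\tilde{A} = \tilde{\pi}$ and $\sum_{l,i} \tilde{\pi}_{(l,i)} = 1$; i.e., $\tilde{\pi}$ is the normalized left eigenvector of $\tilde{A}$ associated with eigenvalue $1$. -/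

import Mathlib

/-!
Every block `B` in block column `k` of `Ã` satisfies `π B = γ k π`: the diagonal block is `γ k A`
and `π A = π`, the others are `γ k I`. So on vectors `v ⊗ π` the matrix `Ã` acts on `v` like the
rank-one matrix all of whose rows are `γ`, which sends `γ` to `(∑ γ) γ`.
-/

open Matrix

section VecKronecker

variable {l m n o R : Type*}

/-- The Kronecker product `v ⊗ w` of two vectors, with entry `v i * w j` at `(i, j)`. With `v = γ`
and `w = π` it is the vector `π̃`. -/
def vecKronecker [Mul R] (v : l → R) (w : n → R) : l × n → R :=
  fun a => v a.1 * w a.2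

theorem sum_vecKronecker [NonUnitalNonAssocSemiring R] [Fintype l] [Fintype n]
    (v : l → R) (w : n → R) : ∑ a, vecKronecker v w a = (∑ i, v i) * ∑ j, w j :=
  (Fintype.sum_prod_type _).trans (Fintype.sum_mul_sum v w).symm

theorem smul_vecKronecker [Semigroup R] (c : R) (v : l → R) (w : n → R) :
    vecKronecker (c • v) w = c • vecKronecker v w :=
  funext fun a => mul_assoc c (v a.1) (w a.2)

theorem vecKronecker_vecMul_comp [NonUnitalSemiring R] [Fintype l] [Fintype n]
    {B : Matrix l m (Matrix n o R)} {C : Matrix l m R} {w : n → R} {w' : o → R}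
    (h : ∀ i k, w ᵥ* B i k = C i k • w') (v : l → R) :
    vecKronecker v w ᵥ* comp l m n o R B = vecKronecker (v ᵥ* C) w' := by
  ext ⟨k, j⟩
  calc ∑ a : l × n, v a.1 * w a.2 * B a.1 k a.2 j
      = ∑ i, v i * (w ᵥ* B i k) j := by
        simp only [Fintype.sum_prod_type, vecMul, dotProduct, Finset.mul_sum, mul_assoc]
    _ = ∑ i, v i * C i k * w' j := by
        simp only [h, Pi.smul_apply, smul_eq_mul, mul_assoc]
    _ = (v ᵥ* C) k * w' j := (Finset.sum_mul ..).symm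

end VecKronecker

section LayeredMatrix

variable {p n R : Type*} [DecidableEq p] [DecidableEq n]

section Semiring

variable [Semiring R]

/-- The block `(l, k)` of the matrix `Ã`, seen as acting on `p` layers: the layer `l` carries
`γ l • A`, and the layer `k` is entered from any other layer through `γ k • 1`. -/
def layerBlock (γ : p → R) (A : Matrix n n R) : Matrix p p (Matrix n n R) :=
  of fun l k => if k = l then γ l • A else γ k • 1

/-- The matrix `Ã` built from `A` and the weights `γ`, assembled from its blocks; the first
component of an index is the layer. -/
def layeredMatrix (γ : p → R) (A : Matrix n n R) : Matrix (p × n) (p × n) R :=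
  comp p p n n R (layerBlock γ A)

theorem layeredMatrix_apply (γ : p → R) (A : Matrix n n R) (a b : p × n) :
    layeredMatrix γ A a b =
      if b.1 = a.1 then γ a.1 * A a.2 b.2 else if b.2 = a.2 then γ b.1 else 0 := by
  rw [layeredMatrix, comp_apply, layerBlock, of_apply]
  split_ifs with hlayer hindex
  · rfl
  · rw [hindex, Matrix.smul_apply, one_apply_eq, smul_eq_mul, mul_one]
  · rw [Matrix.smul_apply, one_apply_ne' hindex, smul_zero]

end Semiring

variable [CommSemiring R] [Fintype n] {A : Matrix n n R} {π : n → R}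

theorem vecMul_layerBlock (hπ : π ᵥ* A = π) (γ : p → R) (l k : p) :
    π ᵥ* layerBlock γ A l k = γ k • π := by
  rcases eq_or_ne k l with rfl | hkl
  · simp only [layerBlock, of_apply, if_true, vecMul_smul, hπ]
  · simp only [layerBlock, of_apply, if_neg hkl, vecMul_smul, vecMul_one]

theorem vecKronecker_vecMul_layeredMatrix [Fintype p] (hπ : π ᵥ* A = π) (γ : p → R) :
    vecKronecker γ π ᵥ* layeredMatrix γ A = (∑ l, γ l) • vecKronecker γ π := by
  have hblock (l k : p) : π ᵥ* layerBlock γ A l k = vecMulVec 1 γ l k • π := by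
    rw [vecMul_layerBlock hπ, vecMulVec_apply, Pi.one_apply, one_mul]
  calc vecKronecker γ π ᵥ* layeredMatrix γ A
      = vecKronecker (γ ᵥ* vecMulVec 1 γ) π := vecKronecker_vecMul_comp hblock γ
    _ = (∑ l, γ l) • vecKronecker γ π := by
        rw [vecMul_vecMulVec, dotProduct_one, smul_vecKronecker]

end LayeredMatrix

theorem stmt4_general {p n R : Type*} [Fintype p] [Fintype n] [DecidableEq p] [DecidableEq n]
    [CommSemiring R] (A : Matrix n n R) (γ : p → R) (π : n → R)
    (hπA : ∀ j, ∑ i, π i * A i j = π j)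
    (At : Matrix (p × n) (p × n) R)
    (hAt : ∀ li kj, At li kj =
      if kj.1 = li.1 then γ li.1 * A li.2 kj.2
      else if kj.2 = li.2 then γ kj.1 else 0)
    (πt : p × n → R) (hπt : ∀ li, πt li = γ li.1 * π li.2) :
    (∀ b, ∑ a, πt a * At a b = (∑ l, γ l) * πt b) ∧
      ∑ a, πt a = (∑ l, γ l) * ∑ i, π i := by
  obtain rfl : πt = vecKronecker γ π := funext hπt
  obtain rfl : At = layeredMatrix γ A :=
    Matrix.ext fun a b => (hAt a b).trans (layeredMatrix_apply γ A a b).symm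
  exact ⟨congrFun (vecKronecker_vecMul_layeredMatrix (funext hπA) γ), sum_vecKronecker γ π⟩

/-- Lemma 2: If `π A = π`, `∑ π i = 1`, and `∑ γ l = 1`, then the
row vector `πt` with `πt (l,i) = γ l * π i` satisfies `πt ⬝ At = πt` and
`∑ πt = 1`; i.e., `πt` is the normalized left eigenvector of `At` for
eigenvalue `1`. -/
theorem stmt4 {n p : ℕ} (A : Matrix (Fin n) (Fin n) ℝ) (γ : Fin p → ℝ)
    (π : Fin n → ℝ)
    (hπA : ∀ j, ∑ i, π i * A i j = π j) (hπ1 : ∑ i, π i = 1)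
    (hγ1 : ∑ l, γ l = 1)
    (At : Matrix (Fin p × Fin n) (Fin p × Fin n) ℝ)
    (hAt : ∀ li kj, At li kj =
      if kj.1 = li.1 then γ li.1 * A li.2 kj.2
      else if kj.2 = li.2 then γ kj.1 else 0)
    (πt : Fin p × Fin n → ℝ) (hπt : ∀ li, πt li = γ li.1 * π li.2) :
    (∀ b : Fin p × Fin n, ∑ a, πt a * At a b = πt b) ∧ ∑ a, πt a = 1 := by
  simpa only [hγ1, hπ1, one_mul] using stmt4_general A γ π hπA At hAt πt hπt
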